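/- Let I_non be a nonlinearity interval such that for every ε ∈ I_non a strictly complementary optimal solution of (P_ε) and (D_ε) exists, and let ε̄ ∈ int(E) be a boundary point of I_non. Suppose that for every sequence {ε_k} ⊆ int(E) with ε_k → ε̄ there exists a sequence of optimal solutions (X(ε_k), y(ε_k), S(ε_k)) converging to a maximally complementary solution (X*(ε̄), y*(ε̄), S*(ε̄)) at ε̄. Then no strictly complementary optimal solution exists at ε̄, and for every ξ > 0 and every ε ∈ (ε̄−ξ, ε̄+ξ) ∩ I_non one has dim B(ε) ≠ dim B(ε̄) or dim N(ε) ≠ dim N(ε̄). -/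

import Mathlib

open Matrix Set

noncomputable section

variable {n m : ℕ}

/-- Feasibility for the primal SDO problem `(P_ε)` (the feasible set does not depend on `ε`). -/
def PrimalFeasible (A : Fin m → Matrix (Fin n) (Fin n) ℝ) (b : Fin m → ℝ)
    (X : Matrix (Fin n) (Fin n) ℝ) : Prop :=
  X.IsSymm ∧ (∀ i, ((A i) * X).trace = b i) ∧ X.PosSemidef

/-- Feasibility for the dual SDO problem `(D_ε)`. -/
def DualFeasible (C Cbar : Matrix (Fin n) (Fin n) ℝ)
    (A : Fin m → Matrix (Fin n) (Fin n) ℝ) (ε : ℝ)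
    (y : Fin m → ℝ) (S : Matrix (Fin n) (Fin n) ℝ) : Prop :=
  S.IsSymm ∧ (∑ i, y i • A i) + S = C + ε • Cbar ∧ S.PosSemidef

/-- The optimal value function `v(ε)` of `(P_ε)`, with values in `EReal`. -/
def vfun (C Cbar : Matrix (Fin n) (Fin n) ℝ) (A : Fin m → Matrix (Fin n) (Fin n) ℝ)
    (b : Fin m → ℝ) (ε : ℝ) : EReal :=
  sInf ((fun X => (((C + ε • Cbar) * X).trace : EReal)) '' {X | PrimalFeasible A b X})

/-- `E = {ε : v(ε) > -∞}`. -/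
def Eset (C Cbar : Matrix (Fin n) (Fin n) ℝ) (A : Fin m → Matrix (Fin n) (Fin n) ℝ)
    (b : Fin m → ℝ) : Set ℝ :=
  {ε | ⊥ < vfun C Cbar A b ε}

/-- The primal optimal set `P*(ε)`. -/
def PrimalOpt (C Cbar : Matrix (Fin n) (Fin n) ℝ) (A : Fin m → Matrix (Fin n) (Fin n) ℝ)
    (b : Fin m → ℝ) (ε : ℝ) : Set (Matrix (Fin n) (Fin n) ℝ) :=
  {X | PrimalFeasible A b X ∧ ∀ X', PrimalFeasible A b X' →
    ((C + ε • Cbar) * X).trace ≤ ((C + ε • Cbar) * X').trace}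

/-- The dual optimal set `D*(ε)`. -/
def DualOpt (C Cbar : Matrix (Fin n) (Fin n) ℝ) (A : Fin m → Matrix (Fin n) (Fin n) ℝ)
    (b : Fin m → ℝ) (ε : ℝ) : Set ((Fin m → ℝ) × Matrix (Fin n) (Fin n) ℝ) :=
  {p | DualFeasible C Cbar A ε p.1 p.2 ∧ ∀ y' S', DualFeasible C Cbar A ε y' S' →
    ∑ i, b i * y' i ≤ ∑ i, b i * p.1 i}

/-- A maximally complementary optimal solution: `X` lies in the relative interior of `P*(ε)`
and `(y, S)` in the relative interior of `D*(ε)`. -/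
def MaxComp (C Cbar : Matrix (Fin n) (Fin n) ℝ) (A : Fin m → Matrix (Fin n) (Fin n) ℝ)
    (b : Fin m → ℝ) (ε : ℝ) (X : Matrix (Fin n) (Fin n) ℝ) (y : Fin m → ℝ)
    (S : Matrix (Fin n) (Fin n) ℝ) : Prop :=
  X ∈ intrinsicInterior ℝ (PrimalOpt C Cbar A b ε) ∧
    (y, S) ∈ intrinsicInterior ℝ (DualOpt C Cbar A b ε)

/-- `π(ε) = π(ε')`: the optimal partitions at `ε` and `ε'` coincide, expressed through
maximally complementary solutions (`B = range X*`, `N = range S*`, `T` being determined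
by `B` and `N`). -/
def SamePartition (C Cbar : Matrix (Fin n) (Fin n) ℝ) (A : Fin m → Matrix (Fin n) (Fin n) ℝ)
    (b : Fin m → ℝ) (ε ε' : ℝ) : Prop :=
  ∃ X y S X' y' S', MaxComp C Cbar A b ε X y S ∧ MaxComp C Cbar A b ε' X' y' S' ∧
    LinearMap.range X.mulVecLin = LinearMap.range X'.mulVecLin ∧
    LinearMap.range S.mulVecLin = LinearMap.range S'.mulVecLin

/-- The standing assumptions: symmetric data, linearly independent constraint matrices and
the interior point condition at `ε = 0`. -/
def StandingAssumptions (C Cbar : Matrix (Fin n) (Fin n) ℝ)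
    (A : Fin m → Matrix (Fin n) (Fin n) ℝ) (b : Fin m → ℝ) : Prop :=
  C.IsSymm ∧ Cbar.IsSymm ∧ (∀ i, (A i).IsSymm) ∧ LinearIndependent ℝ A ∧
    ∃ X y S, PrimalFeasible A b X ∧ X.PosDef ∧ DualFeasible C Cbar A 0 y S ∧ S.PosDef

/-- The invariancy set of `ε̄`. -/
def InvSet (C Cbar : Matrix (Fin n) (Fin n) ℝ) (A : Fin m → Matrix (Fin n) (Fin n) ℝ)
    (b : Fin m → ℝ) (εbar : ℝ) : Set ℝ :=
  {ε | ε ∈ interior (Eset C Cbar A b) ∧ SamePartition C Cbar A b ε εbar}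

/-- `dim B(ε) = dim B(ε')` and `dim N(ε) = dim N(ε')`, expressed through maximally
complementary solutions. -/
def DimsMatch (C Cbar : Matrix (Fin n) (Fin n) ℝ) (A : Fin m → Matrix (Fin n) (Fin n) ℝ)
    (b : Fin m → ℝ) (ε ε' : ℝ) : Prop :=
  ∀ X y S X' y' S', MaxComp C Cbar A b ε X y S → MaxComp C Cbar A b ε' X' y' S' →
    Module.finrank ℝ (LinearMap.range X.mulVecLin) =
        Module.finrank ℝ (LinearMap.range X'.mulVecLin) ∧
      Module.finrank ℝ (LinearMap.range S.mulVecLin) =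
        Module.finrank ℝ (LinearMap.range S'.mulVecLin)

/-- A transition point: a singleton invariancy set such that every neighborhood contains a
parameter at which `dim B` or `dim N` differs. -/
def IsTransitionPoint (C Cbar : Matrix (Fin n) (Fin n) ℝ) (A : Fin m → Matrix (Fin n) (Fin n) ℝ)
    (b : Fin m → ℝ) (εbar : ℝ) : Prop :=
  εbar ∈ interior (Eset C Cbar A b) ∧
    (∀ ε ∈ interior (Eset C Cbar A b), ε ≠ εbar → ¬ SamePartition C Cbar A b ε εbar) ∧
    ∀ ξ : ℝ, 0 < ξ → ∃ ε ∈ Set.Ioo (εbar - ξ) (εbar + ξ) ∩ interior (Eset C Cbar A b),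
      ¬ DimsMatch C Cbar A b ε εbar

/-- Existence of a strictly complementary optimal solution at `ε`. -/
def HasStrictComp (C Cbar : Matrix (Fin n) (Fin n) ℝ) (A : Fin m → Matrix (Fin n) (Fin n) ℝ)
    (b : Fin m → ℝ) (ε : ℝ) : Prop :=
  ∃ X y S, X ∈ PrimalOpt C Cbar A b ε ∧ (y, S) ∈ DualOpt C Cbar A b ε ∧ (X + S).PosDef

/-- Nonsingularity of the Jacobian `J(X, y, S)` of the optimality system, as a linear map on
`S^n × ℝ^m × S^n`: only the trivial symmetric triple is mapped to zero. -/
def JNonsingular (A : Fin m → Matrix (Fin n) (Fin n) ℝ)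
    (X S : Matrix (Fin n) (Fin n) ℝ) : Prop :=
  ∀ (DX DS : Matrix (Fin n) (Fin n) ℝ) (Dy : Fin m → ℝ), DX.IsSymm → DS.IsSymm →
    (∀ i, ((A i) * DX).trace = 0) → ((∑ i, Dy i • A i) + DS = 0) →
    (DX * S + S * DX + X * DS + DS * X = 0) → DX = 0 ∧ Dy = 0 ∧ DS = 0

/-- Primal nondegeneracy of a primal feasible `X`. -/
def PrimalNondeg (A : Fin m → Matrix (Fin n) (Fin n) ℝ)
    (X : Matrix (Fin n) (Fin n) ℝ) : Prop :=
  ∃ (r : ℕ) (M₁ : Matrix (Fin n) (Fin r) ℝ) (M₂ : Matrix (Fin n) (Fin (n - r)) ℝ),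
    M₁ᵀ * M₁ = 1 ∧ M₂ᵀ * M₂ = 1 ∧ M₁ᵀ * M₂ = 0 ∧
    LinearMap.range M₁.mulVecLin = LinearMap.range X.mulVecLin ∧
    LinearIndependent ℝ (fun i =>
      Matrix.fromBlocks (M₁ᵀ * (A i) * M₁) (M₁ᵀ * (A i) * M₂) (M₂ᵀ * (A i) * M₁) 0)

/-- Dual nondegeneracy of a dual feasible `(y, S)` (the condition involves only `S`). -/
def DualNondeg (A : Fin m → Matrix (Fin n) (Fin n) ℝ)
    (S : Matrix (Fin n) (Fin n) ℝ) : Prop :=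
  ∃ (k : ℕ) (N₁ : Matrix (Fin n) (Fin k) ℝ),
    N₁ᵀ * N₁ = 1 ∧ LinearMap.range N₁.mulVecLin = LinearMap.ker S.mulVecLin ∧
    ∀ W : Matrix (Fin k) (Fin k) ℝ, W.IsSymm →
      W ∈ Submodule.span ℝ (Set.range fun i => N₁ᵀ * (A i) * N₁)

/-- A central solution with parameter `μ` for the problems `(P_ε)` and `(D_ε)`. -/
def CentralSol (C Cbar : Matrix (Fin n) (Fin n) ℝ) (A : Fin m → Matrix (Fin n) (Fin n) ℝ)
    (b : Fin m → ℝ) (ε μ : ℝ) (X : Matrix (Fin n) (Fin n) ℝ) (y : Fin m → ℝ)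
    (S : Matrix (Fin n) (Fin n) ℝ) : Prop :=
  PrimalFeasible A b X ∧ DualFeasible C Cbar A ε y S ∧
    X * S = μ • (1 : Matrix (Fin n) (Fin n) ℝ)

/-- The Frobenius norm of a matrix. -/
def frobNorm {α β : Type*} [Fintype α] [Fintype β] (M : Matrix α β ℝ) : ℝ :=
  Real.sqrt (∑ i, ∑ j, (M i j) ^ 2)

/-- The spectral norm (induced 2-norm) of a square matrix. -/
def specNorm {N : ℕ} (M : Matrix (Fin N) (Fin N) ℝ) : ℝ :=
  ‖LinearMap.toContinuousLinearMap (Matrix.toEuclideanLin M)‖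

/-- The smallest eigenvalue of a symmetric matrix, via the Rayleigh quotient. -/
def lamMin {k : ℕ} (M : Matrix (Fin k) (Fin k) ℝ) : ℝ :=
  sInf {r : ℝ | ∃ x : Fin k → ℝ, (∑ i, (x i) ^ 2) = 1 ∧ r = x ⬝ᵥ M.mulVec x}

/-- `θ^μ`: the operator norm of the inverse of the Jacobian `J(X, y, S)` on
`S^n × ℝ^m × S^n`, characterized as the least constant `t ≥ 0` with
`‖(ΔX, Δy, ΔS)‖ ≤ t * ‖J(X,y,S)(ΔX, Δy, ΔS)‖` for all symmetric `ΔX`, `ΔS`. -/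
def thetaMu (A : Fin m → Matrix (Fin n) (Fin n) ℝ)
    (X S : Matrix (Fin n) (Fin n) ℝ) : ℝ :=
  sInf {t : ℝ | 0 ≤ t ∧ ∀ (DX DS : Matrix (Fin n) (Fin n) ℝ) (Dy : Fin m → ℝ),
    DX.IsSymm → DS.IsSymm →
    Real.sqrt (frobNorm DX ^ 2 + (∑ i, (Dy i) ^ 2) + frobNorm DS ^ 2) ≤
      t * Real.sqrt ((∑ i, (((A i) * DX).trace) ^ 2) +
        frobNorm ((∑ i, Dy i • A i) + DS) ^ 2 +
        frobNorm ((1 / 2 : ℝ) • (DX * S + S * DX + X * DS + DS * X)) ^ 2)}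

/-- A nonlinearity interval: a non-singleton open subinterval of `int(E)`, of maximal length,
on which `dim B(·)` and `dim N(·)` are constant while the optimal partition `π(·)` varies. -/
def IsNonlinearityInterval (C Cbar : Matrix (Fin n) (Fin n) ℝ)
    (A : Fin m → Matrix (Fin n) (Fin n) ℝ) (b : Fin m → ℝ) (I : Set ℝ) : Prop :=
  I ⊆ interior (Eset C Cbar A b) ∧ IsOpen I ∧ I.OrdConnected ∧
    (∃ a ∈ I, ∃ c ∈ I, a ≠ c) ∧
    (∀ ε ∈ I, ∀ ε' ∈ I, DimsMatch C Cbar A b ε ε') ∧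
    ¬ (∀ ε ∈ I, ∀ ε' ∈ I, SamePartition C Cbar A b ε ε') ∧
    ∀ I' : Set ℝ, I ⊆ I' → I' ⊆ interior (Eset C Cbar A b) → IsOpen I' → I'.OrdConnected →
      (∀ ε ∈ I', ∀ ε' ∈ I', DimsMatch C Cbar A b ε ε') → I' = I

end

/-!
Optimal `X` and `S` satisfy `S * X = 0`, so `rank X + rank S ≤ n`, with equality for a maximally
complementary pair exactly when a strictly complementary one exists. Suppose equality holds at the
boundary point. The rank is lower semicontinuous, so the optimal solutions converging to the
maximally complementary one have at least its ranks; as the sum of the ranks cannot exceed `n`, both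
ranks are constant near the boundary point. The interval could then be extended past this point,
contradicting maximality. Hence the rank sum is less than `n` at the boundary point, while it
equals `n` on the interval.
-/

open Filter Topology

section ConicDuality

variable {E ι : Type*} [AddCommGroup E] [Module ℝ E]

theorem mul_le_of_forall_feasible_le {K : PointedCone ℝ E} {a : ι → E →ₗ[ℝ] ℝ} {c : E →ₗ[ℝ] ℝ}
    {b : ι → ℝ} {v : ℝ} {x₀ : E} (hx₀K : x₀ ∈ K) (hax₀ : ∀ i, a i x₀ = b i)
    (hv : ∀ x ∈ K, (∀ i, a i x = b i) → v ≤ c x) {x : E} (hx : x ∈ K) {t : ℝ} (ht : 0 ≤ t)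
    (hax : ∀ i, a i x = t * b i) : t * v ≤ c x := by
  have hpert : ∀ δ ∈ Set.Ioi (0 : ℝ), (t + δ) * v ≤ c x + δ * c x₀ := by
    intro δ hδ
    have htδ : 0 < t + δ := add_pos_of_nonneg_of_pos ht hδ
    have hfeas := hv ((t + δ)⁻¹ • (x + δ • x₀))
      (K.smul_mem (inv_nonneg.2 htδ.le) (K.add_mem hx (K.smul_mem (le_of_lt hδ) hx₀K)))
      fun i => by
        rw [map_smul, map_add, map_smul, hax, hax₀, smul_eq_mul, smul_eq_mul, ← add_mul,
          inv_mul_cancel_left₀ htδ.ne']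
    rwa [map_smul, map_add, map_smul, smul_eq_mul, smul_eq_mul, le_inv_mul_iff₀ htδ] at hfeas
  have hlim : Tendsto (fun δ : ℝ => c x + δ * c x₀ - (t + δ) * v) (𝓝[>] 0) (𝓝 (c x - t * v)) :=
    tendsto_nhdsWithin_of_tendsto_nhds (Continuous.tendsto' (by fun_prop) _ _ (by simp))
  exact sub_nonneg.1 (ge_of_tendsto hlim
    (eventually_nhdsWithin_of_forall fun δ hδ => sub_nonneg.2 (hpert δ hδ)))

variable [Fintype ι]

/- The Slater point makes `K` meet every coset of `⋂ i, ker (a i)`, so M. Riesz's theorem extends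
`c` from this subspace to a functional `g` that is nonnegative on `K`; as `c - g` vanishes on the
subspace, it is a combination of the `a i`. -/
theorem exists_sum_mul_le_of_nonneg_on_ker {K : PointedCone ℝ E} {a : ι → E →ₗ[ℝ] ℝ}
    {c : E →ₗ[ℝ] ℝ} {x₀ : E} (hax₀ : ∀ i, a i x₀ = 0) (hx₀ : ∀ z, ∃ r : ℝ, r • x₀ + z ∈ K)
    (hc : ∀ x ∈ K, (∀ i, a i x = 0) → 0 ≤ c x) :
    ∃ y : ι → ℝ, ∀ x ∈ K, ∑ i, y i * a i x ≤ c x := by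
  obtain ⟨g, hgc, hg⟩ := riesz_extension K ⟨⨅ i, LinearMap.ker (a i), c.domRestrict _⟩
    (fun x hxK => hc x hxK (by simpa only [Submodule.mem_iInf, LinearMap.mem_ker] using x.2))
    (fun z => (hx₀ z).imp' (fun r => ⟨r • x₀, by simp [Submodule.mem_iInf, hax₀]⟩) fun _ hr => hr)
  have hspan : c - g ∈ Submodule.span ℝ (Set.range a) := mem_span_of_iInf_ker_le_ker fun x hx => by
    simpa [sub_eq_zero] using (hgc ⟨x, hx⟩).symm
  obtain ⟨y, hy⟩ := (Submodule.mem_span_range_iff_exists_fun ℝ).1 hspan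
  refine ⟨y, fun x hx => ?_⟩
  have hyx : ∑ i, y i * a i x = c x - g x := by simpa using LinearMap.congr_fun hy x
  linarith [hg x hx]

/- Homogenization: apply `exists_sum_mul_le_of_nonneg_on_ker` on `E × ℝ` to the cone `K × [0, ∞)`,
the constraints `a i x = t * b i` and the objective `c x - t * v`. -/
theorem exists_lagrange_multipliers {K : PointedCone ℝ E} {a : ι → E →ₗ[ℝ] ℝ} {c : E →ₗ[ℝ] ℝ}
    {b : ι → ℝ} {v : ℝ} {x₀ : E} (hx₀K : x₀ ∈ K) (hx₀ : ∀ z, ∃ r : ℝ, r • x₀ + z ∈ K)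
    (hax₀ : ∀ i, a i x₀ = b i) (hv : ∀ x ∈ K, (∀ i, a i x = b i) → v ≤ c x) :
    ∃ y : ι → ℝ, (∀ x ∈ K, ∑ i, y i * a i x ≤ c x) ∧ v ≤ ∑ i, b i * y i := by
  let a' (i : ι) : E × ℝ →ₗ[ℝ] ℝ := (a i).coprod (-b i • LinearMap.id)
  let c' : E × ℝ →ₗ[ℝ] ℝ := c.coprod (-v • LinearMap.id)
  let K' : PointedCone ℝ (E × ℝ) := Submodule.prod K (PointedCone.positive ℝ ℝ)
  have ha' (i : ι) (x : E) (t : ℝ) : a' i (x, t) = a i x - t * b i := by simp [a']; ring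
  have hc' (x : E) (t : ℝ) : c' (x, t) = c x - t * v := by simp [c']; ring
  have hK' (x : E) (t : ℝ) : (x, t) ∈ K' ↔ x ∈ K ∧ 0 ≤ t := by
    simp [K', Submodule.mem_prod]
  have hslater : ∀ z, ∃ r : ℝ, r • (x₀, (1 : ℝ)) + z ∈ K' := by
    rintro ⟨z, t⟩
    obtain ⟨r, hr⟩ := hx₀ z
    refine ⟨r + (|r| + |t|), ?_⟩
    rw [Prod.smul_mk, Prod.mk_add_mk, hK']
    refine ⟨?_, ?_⟩
    · simpa only [add_smul, add_right_comm] using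
        K.add_mem hr (K.smul_mem (add_nonneg (abs_nonneg r) (abs_nonneg t)) hx₀K)
    · simp only [smul_eq_mul, mul_one]
      linarith [neg_abs_le r, neg_abs_le t]
  obtain ⟨y, hy⟩ := exists_sum_mul_le_of_nonneg_on_ker (K := K') (a := a') (c := c')
    (x₀ := (x₀, 1)) (fun i => by simp [ha', hax₀]) hslater fun ⟨x, t⟩ hxt hker => by
      obtain ⟨hx, ht⟩ := (hK' x t).1 hxt
      rw [hc', sub_nonneg]
      exact mul_le_of_forall_feasible_le hx₀K hax₀ hv hx ht
        fun i => sub_eq_zero.1 ((ha' i x t).symm.trans (hker i))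
  refine ⟨y, fun x hx => ?_, ?_⟩
  · simpa [ha', hc'] using hy (x, 0) ((hK' x 0).2 ⟨hx, le_rfl⟩)
  · simpa [ha', hc', mul_comm] using hy (0, 1) ((hK' 0 1).2 ⟨K.zero_mem, zero_le_one⟩)

end ConicDuality

section Matrix

open scoped ComplexOrder MatrixOrder

variable {𝕜 ι : Type*} [RCLike 𝕜] [Fintype ι]

theorem rank_mulVecLin_eq_cast_rank {K μ : Type*} [Field K] (M : Matrix μ ι K) :
    M.mulVecLin.rank = M.rank :=
  (Module.finrank_eq_rank K _).symm

theorem rank_add_le_rank_add_rank {K μ : Type*} [Field K] (M N : Matrix μ ι K) :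
    (M + N).rank ≤ M.rank + N.rank := by
  have h := LinearMap.rank_add_le M.mulVecLin N.mulVecLin
  simp only [← Matrix.mulVecLin_add, rank_mulVecLin_eq_cast_rank] at h
  exact_mod_cast h

theorem eventually_rank_le_rank {μ : Type*} [Finite μ] (M : Matrix μ ι 𝕜) :
    ∀ᶠ N in 𝓝 M, M.rank ≤ N.rank := by
  have := Fintype.ofFinite μ
  let toCLM : Matrix μ ι 𝕜 →ₗ[𝕜] (ι → 𝕜) →L[𝕜] (μ → 𝕜) :=
    LinearMap.toContinuousLinearMap.toLinearMap ∘ₗ Matrix.mulVecBilin 𝕜 𝕜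
  have hopen := (isOpen_setOfPred_nat_le_rank M.rank).preimage
    toCLM.continuous_of_finiteDimensional
  filter_upwards [hopen.mem_nhds (rank_mulVecLin_eq_cast_rank M).ge] with N hN
  exact Nat.cast_le.1 (hN.trans_eq (rank_mulVecLin_eq_cast_rank N))

theorem rank_real_smul {μ : Type*} {c : ℝ} (hc : c ≠ 0) (M : Matrix μ ι 𝕜) :
    (c • M).rank = M.rank := by
  rw [RCLike.real_smul_eq_coe_smul (K := 𝕜)]
  exact rank_smul_of_mem_nonZeroDivisors M
    (mem_nonZeroDivisors_of_ne_zero (RCLike.ofReal_ne_zero.2 hc))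

theorem rank_le_rank_of_ker_le_ker {K μ ν : Type*} [Field K] {M : Matrix μ ι K} {N : Matrix ν ι K}
    (h : LinearMap.ker N.mulVecLin ≤ LinearMap.ker M.mulVecLin) : M.rank ≤ N.rank := by
  have hM := M.mulVecLin.finrank_range_add_finrank_ker
  have hN := N.mulVecLin.finrank_range_add_finrank_ker
  have hker := Submodule.finrank_mono h
  unfold Matrix.rank
  lia

theorem rank_le_rank_add_of_posSemidef {M N : Matrix ι ι 𝕜} (hM : M.PosSemidef)
    (hN : N.PosSemidef) : M.rank ≤ (M + N).rank := by
  refine rank_le_rank_of_ker_le_ker fun x hx => ?_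
  simp only [LinearMap.mem_ker, mulVecLin_apply] at hx ⊢
  have hsum : star x ⬝ᵥ M *ᵥ x + star x ⬝ᵥ N *ᵥ x = 0 := by
    rw [← dotProduct_add, ← add_mulVec, hx, dotProduct_zero]
  exact (hM.dotProduct_mulVec_zero_iff x).1 <| ((add_eq_zero_iff_of_nonneg
    (hM.dotProduct_mulVec_nonneg x) (hN.dotProduct_mulVec_nonneg x)).1 hsum).1

open scoped Matrix.Norms.L2Operator in
theorem exists_eq_conjTranspose_mul_self {M : Matrix ι ι 𝕜} (hM : M.PosSemidef) :
    ∃ R : Matrix ι ι 𝕜, M = Rᴴ * R := by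
  classical exact CStarAlgebra.nonneg_iff_eq_star_mul_self.1 hM.nonneg

theorem trace_mul_nonneg_of_posSemidef {M N : Matrix ι ι 𝕜} (hM : M.PosSemidef)
    (hN : N.PosSemidef) : 0 ≤ (M * N).trace := by
  obtain ⟨R, rfl⟩ := exists_eq_conjTranspose_mul_self hN
  rw [← mul_assoc, trace_mul_comm, ← mul_assoc]
  exact (hM.mul_mul_conjTranspose_same R).trace_nonneg

theorem mul_eq_zero_of_trace_mul_eq_zero {M N : Matrix ι ι 𝕜} (hM : M.PosSemidef)
    (hN : N.PosSemidef) (h : (M * N).trace = 0) : M * N = 0 := by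
  obtain ⟨Q, rfl⟩ := exists_eq_conjTranspose_mul_self hM
  obtain ⟨R, rfl⟩ := exists_eq_conjTranspose_mul_self hN
  have hQR : Q * Rᴴ = 0 := by
    rw [← trace_conjTranspose_mul_self_eq_zero_iff, ← h, ← mul_assoc (Qᴴ * Q),
      trace_mul_comm _ R]
    simp only [conjTranspose_mul, conjTranspose_conjTranspose, mul_assoc]
  calc Qᴴ * Q * (Rᴴ * R) = Qᴴ * (Q * Rᴴ) * R := by simp only [mul_assoc]
    _ = 0 := by simp [hQR]

open scoped Matrix.Norms.L2Operator in
theorem exists_smul_add_posSemidef {μ : Type*} [Finite μ] {M N : Matrix μ μ 𝕜}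
    (hM : M.PosDef) (hN : N.IsHermitian) : ∃ r : ℝ, (r • M + N).PosSemidef := by
  classical
  have := Fintype.ofFinite μ
  obtain ⟨Q, hQ, rfl⟩ :=
    CStarAlgebra.isStrictlyPositive_iff_eq_star_mul_self.1 hM.isStrictlyPositive
  obtain ⟨P, hPQ⟩ := hQ.exists_left_inv
  have hN' : IsSelfAdjoint (Pᴴ * N * P) := isHermitian_conjTranspose_mul_mul P hN
  obtain ⟨l, hl⟩ := (finite_real_spectrum (A := Pᴴ * N * P)).bddBelow
  have hl' : algebraMap ℝ _ l ≤ Pᴴ * N * P := (algebraMap_le_iff_le_spectrum hN').2 hl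
  refine ⟨-l, ?_⟩
  convert (Matrix.le_iff.1 hl').conjTranspose_mul_mul_same Q using 1
  have hPQ' : Qᴴ * Pᴴ = 1 := by rw [← conjTranspose_mul, hPQ, conjTranspose_one]
  calc -l • (star Q * Q) + N = (Qᴴ * Pᴴ) * N * (P * Q) - l • (Qᴴ * Q) := by
        rw [hPQ, hPQ', one_mul, mul_one, neg_smul, star_eq_conjTranspose, neg_add_eq_sub]
    _ = Qᴴ * (Pᴴ * N * P - algebraMap ℝ _ l) * Q := by
        simp only [mul_sub, sub_mul, mul_assoc, Algebra.algebraMap_eq_smul_one,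
          mul_smul_comm, smul_mul_assoc, one_mul]

end Matrix

section IntrinsicInterior

variable {E : Type*} [AddCommGroup E] [Module ℝ E] [TopologicalSpace E] {s : Set E} {x x' : E}

theorem exists_pos_add_smul_sub_mem_of_mem_intrinsicInterior [ContinuousAdd E]
    [ContinuousSMul ℝ E] (hx : x ∈ intrinsicInterior ℝ s) (hx' : x' ∈ s) :
    ∃ t : ℝ, 0 < t ∧ x + t • (x - x') ∈ s := by
  obtain ⟨z, hz, rfl⟩ := mem_intrinsicInterior.1 hx
  have hmem (t : ℝ) : (z : E) + t • ((z : E) - x') ∈ affineSpan ℝ s := by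
    rw [add_comm]
    exact AffineSubspace.smul_vsub_vadd_mem _ t z.2 (subset_affineSpan ℝ s hx') z.2
  let ray (t : ℝ) : affineSpan ℝ s := ⟨z + t • ((z : E) - x'), hmem t⟩
  have hray : Continuous ray := Continuous.subtype_mk (by fun_prop) _
  have hray₀ : ray 0 = z := Subtype.ext (by simp [ray])
  have hev : ∀ᶠ t in 𝓝 (0 : ℝ), (ray t : E) ∈ s :=
    hray.continuousAt.eventually (hray₀ ▸ mem_interior_iff_mem_nhds.1 hz)
  have hpos : ∀ᶠ t in 𝓝[>] (0 : ℝ), 0 < t := self_mem_nhdsWithin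
  exact (hpos.and (hev.filter_mono nhdsWithin_le_nhds)).exists

open scoped ComplexOrder in
theorem rank_map_le_rank_map_of_mem_intrinsicInterior [ContinuousAdd E] [ContinuousSMul ℝ E]
    {𝕜 ι : Type*} [RCLike 𝕜] [Fintype ι] (φ : E →ₗ[ℝ] Matrix ι ι 𝕜)
    (hφ : ∀ z ∈ s, (φ z).PosSemidef) (hx : x ∈ intrinsicInterior ℝ s) (hx' : x' ∈ s) :
    (φ x').rank ≤ (φ x).rank := by
  obtain ⟨t, ht, hmem⟩ := exists_pos_add_smul_sub_mem_of_mem_intrinsicInterior hx hx'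
  calc (φ x').rank = (t • φ x').rank := (rank_real_smul ht.ne' _).symm
    _ ≤ (t • φ x' + φ (x + t • (x - x'))).rank :=
      rank_le_rank_add_of_posSemidef ((hφ x' hx').smul ht.le) (hφ _ hmem)
    _ = ((1 + t) • φ x).rank := by
      congr 1
      simp only [map_add, map_smul, map_sub]
      module
    _ = (φ x).rank := rank_real_smul (by positivity) _

end IntrinsicInterior

theorem convex_setOf_isMinOn {𝕜 E β : Type*} [Semiring 𝕜] [PartialOrder 𝕜] [AddCommMonoid E]
    [SMul 𝕜 E] [AddCommMonoid β] [PartialOrder β] [IsOrderedAddMonoid β] [Module 𝕜 β]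
    [PosSMulMono 𝕜 β] {s : Set E} {f : E → β} (hf : ConvexOn 𝕜 s f) :
    Convex 𝕜 {x ∈ s | IsMinOn f s x} := by
  rintro x ⟨hxs, hx⟩ y ⟨hys, hy⟩ p q hp hq hpq
  refine ⟨hf.1 hxs hys hp hq hpq, isMinOn_iff.2 fun z hz => ?_⟩
  calc f (p • x + q • y) ≤ p • f x + q • f y := hf.2 hxs hys hp hq hpq
    _ ≤ p • f z + q • f z := by
      gcongr
      exacts [isMinOn_iff.1 hx z hz, isMinOn_iff.1 hy z hz]
    _ = f z := Convex.combo_self hpq _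

theorem eventually_exists_of_forall_seq_tendsto {α β : Type*} {l : Filter α} {l' : Filter β}
    [l.IsCountablyGenerated] {s : Set α} (hs : s ∈ l) {r : α → β → Prop} {p : β → Prop}
    (h : ∀ u : ℕ → α, (∀ k, u k ∈ s) → Tendsto u atTop l →
      ∃ v : ℕ → β, (∀ k, r (u k) (v k)) ∧ Tendsto v atTop l')
    (hp : ∀ᶠ y in l', p y) : ∀ᶠ x in l, ∃ y, r x y ∧ p y := by
  by_contra hcon
  obtain ⟨u, hul, hu⟩ := exists_seq_forall_of_frequently
    ((not_eventually.1 hcon).and_eventually hs)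
  obtain ⟨v, hrv, hv⟩ := h u (fun k => (hu k).2) hul
  obtain ⟨k, hk⟩ := (hv.eventually hp).exists
  exact (hu k).1 ⟨v k, hrv k, hk⟩

section SemidefiniteDuality

open scoped ComplexOrder in
theorem posSemidef_of_forall_trace_mul_nonneg {𝕜 κ : Type*} [RCLike 𝕜] [Fintype κ]
    {M : Matrix κ κ 𝕜} (hM : M.IsHermitian)
    (h : ∀ X : Matrix κ κ 𝕜, X.PosSemidef → 0 ≤ (M * X).trace) : M.PosSemidef :=
  .of_dotProduct_mulVec_nonneg hM fun x => by
    simpa only [mul_vecMulVec, trace_vecMulVec, dotProduct_comm] using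
      h _ (posSemidef_vecMulVec_self_star x)

variable {κ ι : Type*} [Fintype κ] [Fintype ι]

theorem exists_posSemidef_sub_sum_smul {A : ι → Matrix κ κ ℝ} {b : ι → ℝ} {G X₀ : Matrix κ κ ℝ}
    {v : ℝ} (hG : G.IsHermitian) (hA : ∀ i, (A i).IsHermitian) (hX₀ : X₀.PosDef)
    (hAX₀ : ∀ i, (A i * X₀).trace = b i)
    (hv : ∀ X, X.PosSemidef → (∀ i, (A i * X).trace = b i) → v ≤ (G * X).trace) :
    ∃ y : ι → ℝ, (G - ∑ i, y i • A i).PosSemidef ∧ v ≤ ∑ i, b i * y i := by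
  let traceMul (M : Matrix κ κ ℝ) : selfAdjoint.submodule ℝ (Matrix κ κ ℝ) →ₗ[ℝ] ℝ :=
    Matrix.traceLinearMap κ ℝ ℝ ∘ₗ LinearMap.mulLeft ℝ M ∘ₗ Submodule.subtype _
  let K : PointedCone ℝ (selfAdjoint.submodule ℝ (Matrix κ κ ℝ)) :=
    { carrier := {X | (X : Matrix κ κ ℝ).PosSemidef}
      add_mem' := fun hX hY => hX.add hY
      zero_mem' := .zero
      smul_mem' := fun r _ hX => hX.smul r.2 }
  obtain ⟨y, hy, hvy⟩ := exists_lagrange_multipliers (K := K) (a := fun i => traceMul (A i))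
    (c := traceMul G) (x₀ := ⟨X₀, hX₀.1⟩) hX₀.posSemidef
    (fun Z => exists_smul_add_posSemidef hX₀ Z.2) hAX₀ fun X => hv X
  refine ⟨y, posSemidef_of_forall_trace_mul_nonneg ?_ fun X hX => ?_, hvy⟩
  · exact hG.sub <| isSelfAdjoint_sum _ fun i _ => (hA i).smul (IsSelfAdjoint.all (y i))
  · have hyX := hy ⟨X, hX.1⟩ hX
    simpa [sub_mul, Finset.sum_mul, traceMul] using hyX

end SemidefiniteDuality

section ParametricOptimization

variable {n m : ℕ} {C Cbar : Matrix (Fin n) (Fin n) ℝ} {A : Fin m → Matrix (Fin n) (Fin n) ℝ}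
  {b : Fin m → ℝ} {ε ε' ε'' : ℝ} {X X' S S' : Matrix (Fin n) (Fin n) ℝ} {y y' : Fin m → ℝ}

/-- The primal half of `StandingAssumptions`: symmetric data and a strictly feasible primal point,
which give a zero duality gap and dual attainment at every `ε` with finite value. -/
structure PrimalStandingAssumptions (C Cbar : Matrix (Fin n) (Fin n) ℝ)
    (A : Fin m → Matrix (Fin n) (Fin n) ℝ) (b : Fin m → ℝ) : Prop where
  isSymm_C : C.IsSymm
  isSymm_Cbar : Cbar.IsSymm
  isSymm_A : ∀ i, (A i).IsSymm
  exists_posDef : ∃ X, PrimalFeasible A b X ∧ X.PosDef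

theorem StandingAssumptions.primal (h : StandingAssumptions C Cbar A b) :
    PrimalStandingAssumptions C Cbar A b :=
  let ⟨hC, hCbar, hA, _, X, _, _, hX, hXpos, _⟩ := h
  ⟨hC, hCbar, hA, X, hX, hXpos⟩

theorem PrimalStandingAssumptions.exists_dualFeasible_ge (h : PrimalStandingAssumptions C Cbar A b)
    {v : ℝ} (hv : ∀ X, PrimalFeasible A b X → v ≤ ((C + ε • Cbar) * X).trace) :
    ∃ y S, DualFeasible C Cbar A ε y S ∧ v ≤ ∑ i, b i * y i := by
  obtain ⟨X₀, hX₀, hX₀pos⟩ := h.exists_posDef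
  have hG : (C + ε • Cbar).IsSymm := h.isSymm_C.add (h.isSymm_Cbar.smul ε)
  obtain ⟨y, hS, hy⟩ := exists_posSemidef_sub_sum_smul (v := v)
    (isHermitian_iff_isSymm.2 hG) (fun i => isHermitian_iff_isSymm.2 (h.isSymm_A i))
    hX₀pos hX₀.2.1 fun X hX hAX => hv X ⟨isHermitian_iff_isSymm.1 hX.1, hAX, hX⟩
  exact ⟨y, _, ⟨isHermitian_iff_isSymm.1 hS.1, add_sub_cancel _ _, hS⟩, hy⟩

theorem DualFeasible.trace_objective_eq (hyS : DualFeasible C Cbar A ε y S)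
    (hX : PrimalFeasible A b X) :
    ((C + ε • Cbar) * X).trace = ∑ i, b i * y i + (S * X).trace := by
  rw [← hyS.2.1, add_mul, trace_add, Finset.sum_mul, trace_sum]
  simp only [smul_mul_assoc, trace_smul, hX.2.1, smul_eq_mul, mul_comm]

theorem PrimalStandingAssumptions.mul_eq_zero_of_mem_opt
    (h : PrimalStandingAssumptions C Cbar A b) (hX : X ∈ PrimalOpt C Cbar A b ε)
    (hyS : (y, S) ∈ DualOpt C Cbar A b ε) : S * X = 0 := by
  obtain ⟨y', S', hfeas, hgap⟩ := h.exists_dualFeasible_ge hX.2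
  have hobj := hyS.1.trace_objective_eq hX.1
  have hnonneg := trace_mul_nonneg_of_posSemidef hyS.1.2.2 hX.1.2.2
  exact mul_eq_zero_of_trace_mul_eq_zero hyS.1.2.2 hX.1.2.2
    (by linarith [hyS.2 y' S' hfeas])

theorem PrimalStandingAssumptions.rank_add_rank_le (h : PrimalStandingAssumptions C Cbar A b)
    (hX : X ∈ PrimalOpt C Cbar A b ε) (hyS : (y, S) ∈ DualOpt C Cbar A b ε) :
    X.rank + S.rank ≤ n := by
  simpa only [add_comm, Fintype.card_fin] using
    rank_add_rank_le_card_of_mul_eq_zero (h.mul_eq_zero_of_mem_opt hX hyS)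

theorem convex_setOf_primalFeasible : Convex ℝ {X | PrimalFeasible A b X} := by
  rintro X ⟨hX, hAX, hXpos⟩ X' ⟨hX', hAX', hXpos'⟩ p q hp hq hpq
  refine ⟨(hX.smul p).add (hX'.smul q), fun i => ?_, (hXpos.smul hp).add (hXpos'.smul hq)⟩
  simp only [mul_add, mul_smul_comm, trace_add, trace_smul, hAX, hAX', Convex.combo_self hpq]

theorem convex_setOf_dualFeasible :
    Convex ℝ {p : (Fin m → ℝ) × Matrix (Fin n) (Fin n) ℝ | DualFeasible C Cbar A ε p.1 p.2} := by
  rintro ⟨y, S⟩ ⟨hS, hyS, hSpos⟩ ⟨y', S'⟩ ⟨hS', hyS', hSpos'⟩ p q hp hq hpq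
  refine ⟨(hS.smul p).add (hS'.smul q), ?_, (hSpos.smul hp).add (hSpos'.smul hq)⟩
  calc ∑ i, (p • y + q • y') i • A i + (p • S + q • S')
      = p • (∑ i, y i • A i + S) + q • (∑ i, y' i • A i + S') := by
        simp only [Pi.add_apply, Pi.smul_apply, add_smul, smul_assoc, Finset.sum_add_distrib,
          smul_add, Finset.smul_sum]
        abel
    _ = C + ε • Cbar := by rw [hyS, hyS', Convex.combo_self hpq]

theorem convex_primalOpt : Convex ℝ (PrimalOpt C Cbar A b ε) :=
  convex_setOf_isMinOn <|
    (Matrix.traceLinearMap (Fin n) ℝ ℝ ∘ₗ LinearMap.mulLeft ℝ (C + ε • Cbar)).convexOn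
      convex_setOf_primalFeasible

theorem convex_dualOpt : Convex ℝ (DualOpt C Cbar A b ε) := by
  have hmin := convex_setOf_isMinOn <|
    (-(dotProductBilin ℝ ℝ b ∘ₗ LinearMap.fst ℝ (Fin m → ℝ) (Matrix (Fin n) (Fin n) ℝ))).convexOn
      (convex_setOf_dualFeasible (C := C) (Cbar := Cbar) (A := A) (ε := ε))
  simpa [DualOpt, isMinOn_iff, dotProduct] using hmin

section

attribute [local instance] Matrix.normedAddCommGroup Matrix.normedSpace

theorem exists_maxComp_of_mem_opt (hX : X ∈ PrimalOpt C Cbar A b ε)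
    (hyS : (y, S) ∈ DualOpt C Cbar A b ε) :
    ∃ X y S, MaxComp C Cbar A b ε X y S := by
  obtain ⟨X', hX'⟩ := Set.Nonempty.intrinsicInterior convex_primalOpt ⟨X, hX⟩
  obtain ⟨⟨y', S'⟩, hyS'⟩ := Set.Nonempty.intrinsicInterior convex_dualOpt ⟨(y, S), hyS⟩
  exact ⟨X', y', S', hX', hyS'⟩

end

theorem HasStrictComp.exists_maxComp (h : HasStrictComp C Cbar A b ε) :
    ∃ X y S, MaxComp C Cbar A b ε X y S :=
  let ⟨_, _, _, hX, hyS, _⟩ := h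
  exists_maxComp_of_mem_opt hX hyS

namespace MaxComp

theorem mem_primalOpt (h : MaxComp C Cbar A b ε X y S) : X ∈ PrimalOpt C Cbar A b ε :=
  intrinsicInterior_subset h.1

theorem mem_dualOpt (h : MaxComp C Cbar A b ε X y S) : (y, S) ∈ DualOpt C Cbar A b ε :=
  intrinsicInterior_subset h.2

theorem rank_le_primal (h : MaxComp C Cbar A b ε X y S) (hX' : X' ∈ PrimalOpt C Cbar A b ε) :
    X'.rank ≤ X.rank :=
  rank_map_le_rank_map_of_mem_intrinsicInterior (𝕜 := ℝ) LinearMap.id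
    (fun _ hZ => hZ.1.2.2) h.1 hX'

theorem rank_le_dual (h : MaxComp C Cbar A b ε X y S)
    (hyS' : (y', S') ∈ DualOpt C Cbar A b ε) : S'.rank ≤ S.rank :=
  rank_map_le_rank_map_of_mem_intrinsicInterior (𝕜 := ℝ) (x := (y, S)) (x' := (y', S'))
    (LinearMap.snd ℝ (Fin m → ℝ) (Matrix (Fin n) (Fin n) ℝ)) (fun _ hZ => hZ.1.2.2) h.2 hyS'

theorem rank_eq_primal (h : MaxComp C Cbar A b ε X y S) (h' : MaxComp C Cbar A b ε X' y' S') :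
    X.rank = X'.rank :=
  (h'.rank_le_primal h.mem_primalOpt).antisymm (h.rank_le_primal h'.mem_primalOpt)

theorem rank_eq_dual (h : MaxComp C Cbar A b ε X y S) (h' : MaxComp C Cbar A b ε X' y' S') :
    S.rank = S'.rank :=
  (h'.rank_le_dual h.mem_dualOpt).antisymm (h.rank_le_dual h'.mem_dualOpt)

theorem rank_add_rank_eq_of_hasStrictComp (hSA : PrimalStandingAssumptions C Cbar A b)
    (h : MaxComp C Cbar A b ε X y S) (hsc : HasStrictComp C Cbar A b ε) : X.rank + S.rank = n := by
  obtain ⟨X', y', S', hX', hyS', hpos⟩ := hsc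
  refine (hSA.rank_add_rank_le h.mem_primalOpt h.mem_dualOpt).antisymm ?_
  calc n = (X' + S').rank := by rw [rank_of_isUnit _ hpos.isUnit, Fintype.card_fin]
    _ ≤ X'.rank + S'.rank := rank_add_le_rank_add_rank X' S'
    _ ≤ X.rank + S.rank := add_le_add (h.rank_le_primal hX') (h.rank_le_dual hyS')

theorem dimsMatch_of_rank_le (hSA : PrimalStandingAssumptions C Cbar A b)
    (h : MaxComp C Cbar A b ε X y S) (hsum : X.rank + S.rank = n)
    (hX' : X' ∈ PrimalOpt C Cbar A b ε') (hyS' : (y', S') ∈ DualOpt C Cbar A b ε')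
    (hXX' : X.rank ≤ X'.rank) (hSS' : S.rank ≤ S'.rank) : DimsMatch C Cbar A b ε' ε := by
  intro X₁ y₁ S₁ X₂ y₂ S₂ h₁ h₂
  have hX₁ := h₁.rank_le_primal hX'
  have hS₁ := h₁.rank_le_dual hyS'
  have hsum₁ := hSA.rank_add_rank_le h₁.mem_primalOpt h₁.mem_dualOpt
  have hX₂ := h.rank_eq_primal h₂
  have hS₂ := h.rank_eq_dual h₂
  change X₁.rank = X₂.rank ∧ S₁.rank = S₂.rank
  lia

end MaxComp

namespace DimsMatch

theorem symm (h : DimsMatch C Cbar A b ε ε') : DimsMatch C Cbar A b ε' ε :=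
  fun _ _ _ _ _ _ h' h₀ => (h _ _ _ _ _ _ h₀ h').imp Eq.symm Eq.symm

theorem trans (h : DimsMatch C Cbar A b ε ε') (h' : DimsMatch C Cbar A b ε' ε'')
    (hmc : ∃ X y S, MaxComp C Cbar A b ε' X y S) : DimsMatch C Cbar A b ε ε'' := by
  obtain ⟨X', y', S', hmc'⟩ := hmc
  intro X y S X'' y'' S'' hmc hmc''
  obtain ⟨hX, hS⟩ := h _ _ _ _ _ _ hmc hmc'
  obtain ⟨hX', hS'⟩ := h' _ _ _ _ _ _ hmc' hmc''
  exact ⟨hX.trans hX', hS.trans hS'⟩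

end DimsMatch

/-- An open interval of `int(E)` on which `dim B(·)` and `dim N(·)` are constant. A nonlinearity
interval is a maximal one, non-singleton and with varying optimal partition. -/
def IsConstantRankInterval (C Cbar : Matrix (Fin n) (Fin n) ℝ)
    (A : Fin m → Matrix (Fin n) (Fin n) ℝ) (b : Fin m → ℝ) (I : Set ℝ) : Prop :=
  I ⊆ interior (Eset C Cbar A b) ∧ IsOpen I ∧ I.OrdConnected ∧
    ∀ ε ∈ I, ∀ ε' ∈ I, DimsMatch C Cbar A b ε ε'

variable {I : Set ℝ}

theorem IsNonlinearityInterval.maximal (h : IsNonlinearityInterval C Cbar A b I) :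
    Maximal (IsConstantRankInterval C Cbar A b) I :=
  let ⟨hE, hopen, hord, _, hdims, _, hmax⟩ := h
  ⟨⟨hE, hopen, hord, hdims⟩, fun I' ⟨hE', hopen', hord', hdims'⟩ hII' =>
    (hmax I' hII' hE' hopen' hord' hdims').le⟩

theorem IsConstantRankInterval.union_ball {δ : ℝ} (hI : IsConstantRankInterval C Cbar A b I)
    (hmcI : ∀ ε' ∈ I, ∃ X y S, MaxComp C Cbar A b ε' X y S)
    (hmc : ∃ X y S, MaxComp C Cbar A b ε X y S)
    (hne : (I ∩ Metric.ball ε δ).Nonempty)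
    (hball : ∀ ε' ∈ Metric.ball ε δ,
      ε' ∈ interior (Eset C Cbar A b) ∧ DimsMatch C Cbar A b ε' ε) :
    IsConstantRankInterval C Cbar A b (I ∪ Metric.ball ε δ) := by
  obtain ⟨hE, hopen, hord, hdims⟩ := hI
  obtain ⟨ε₀, hε₀I, hε₀⟩ := hne
  have hdims_center : ∀ ε' ∈ I ∪ Metric.ball ε δ, DimsMatch C Cbar A b ε' ε := by
    rintro ε' (hε' | hε')
    · exact (hdims ε' hε' ε₀ hε₀I).trans (hball ε₀ hε₀).2 (hmcI ε₀ hε₀I)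
    · exact (hball ε' hε').2
  exact ⟨union_subset hE fun ε' hε' => (hball ε' hε').1, hopen.union Metric.isOpen_ball,
    (IsPreconnected.union ε₀ hε₀I hε₀ hord.isPreconnected
      (convex_ball ε δ).isPreconnected).ordConnected,
    fun ε₁ hε₁ ε₂ hε₂ => (hdims_center ε₁ hε₁).trans (hdims_center ε₂ hε₂).symm hmc⟩

theorem mem_of_eventually_dimsMatch (hI : Maximal (IsConstantRankInterval C Cbar A b) I)
    (hmcI : ∀ ε' ∈ I, ∃ X y S, MaxComp C Cbar A b ε' X y S)
    (hε : ε ∈ interior (Eset C Cbar A b)) (hεI : ε ∈ closure I)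
    (hmc : ∃ X y S, MaxComp C Cbar A b ε X y S)
    (hdims : ∀ᶠ ε' in 𝓝 ε, DimsMatch C Cbar A b ε' ε) : ε ∈ I := by
  obtain ⟨δ, hδ, hball⟩ := Metric.eventually_nhds_iff_ball.1
    ((isOpen_interior.eventually_mem hε).and hdims)
  have hne : (I ∩ Metric.ball ε δ).Nonempty := by
    rw [inter_comm]
    exact mem_closure_iff.1 hεI _ Metric.isOpen_ball (Metric.mem_ball_self hδ)
  exact hI.le_of_ge (hI.prop.union_ball hmcI hmc hne hball) subset_union_left
    (Or.inr (Metric.mem_ball_self hδ))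

/-- `(X, y, S)` belongs to the inner (Painlevé–Kuratowski) limit of the optimal solution sets as the
parameter tends to `ε` in `int(E)`: the convergence assumption of the theorem. -/
def IsInnerLimitOfOpt (C Cbar : Matrix (Fin n) (Fin n) ℝ) (A : Fin m → Matrix (Fin n) (Fin n) ℝ)
    (b : Fin m → ℝ) (ε : ℝ) (X : Matrix (Fin n) (Fin n) ℝ) (y : Fin m → ℝ)
    (S : Matrix (Fin n) (Fin n) ℝ) : Prop :=
  ∀ u : ℕ → ℝ, (∀ k, u k ∈ interior (Eset C Cbar A b)) → Tendsto u atTop (𝓝 ε) →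
    ∃ (Xk : ℕ → Matrix (Fin n) (Fin n) ℝ) (yk : ℕ → Fin m → ℝ)
        (Sk : ℕ → Matrix (Fin n) (Fin n) ℝ),
      (∀ k, Xk k ∈ PrimalOpt C Cbar A b (u k) ∧ (yk k, Sk k) ∈ DualOpt C Cbar A b (u k)) ∧
        Tendsto (fun k => (Xk k, yk k, Sk k)) atTop (𝓝 (X, y, S))

theorem IsInnerLimitOfOpt.eventually_exists_rank_le_rank
    (hconv : IsInnerLimitOfOpt C Cbar A b ε X y S) (hε : ε ∈ interior (Eset C Cbar A b)) :
    ∀ᶠ ε' in 𝓝 ε, ∃ p : Matrix (Fin n) (Fin n) ℝ × (Fin m → ℝ) × Matrix (Fin n) (Fin n) ℝ,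
      (p.1 ∈ PrimalOpt C Cbar A b ε' ∧ p.2 ∈ DualOpt C Cbar A b ε') ∧
        X.rank ≤ p.1.rank ∧ S.rank ≤ p.2.2.rank := by
  have hX : ∀ᶠ p in 𝓝 (X, y, S), X.rank ≤ p.1.rank :=
    (continuous_fst.tendsto (X, y, S)).eventually (p := fun M => X.rank ≤ M.rank)
      (eventually_rank_le_rank X)
  have hS : ∀ᶠ p in 𝓝 (X, y, S), S.rank ≤ p.2.2.rank :=
    (continuous_snd.snd.tendsto (X, y, S)).eventually (p := fun M => S.rank ≤ M.rank)
      (eventually_rank_le_rank S)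
  refine eventually_exists_of_forall_seq_tendsto (isOpen_interior.mem_nhds hε)
    (fun u huE hu => ?_) (hX.and hS)
  obtain ⟨Xk, yk, Sk, hopt, hlim⟩ := hconv u huE hu
  exact ⟨fun k => (Xk k, yk k, Sk k), hopt, hlim⟩

theorem MaxComp.rank_add_rank_ne_of_mem_frontier (hSA : PrimalStandingAssumptions C Cbar A b)
    (hI : Maximal (IsConstantRankInterval C Cbar A b) I)
    (hmcI : ∀ ε' ∈ I, ∃ X y S, MaxComp C Cbar A b ε' X y S)
    (hε : ε ∈ interior (Eset C Cbar A b)) (hfr : ε ∈ frontier I)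
    (hmc : MaxComp C Cbar A b ε X y S) (hconv : IsInnerLimitOfOpt C Cbar A b ε X y S) :
    X.rank + S.rank ≠ n := by
  intro hsum
  rw [hI.prop.2.1.frontier_eq] at hfr
  have hdims : ∀ᶠ ε' in 𝓝 ε, DimsMatch C Cbar A b ε' ε :=
    (hconv.eventually_exists_rank_le_rank hε).mono fun ε' ⟨p, ⟨hX', hyS'⟩, hXX', hSS'⟩ =>
      hmc.dimsMatch_of_rank_le hSA hsum hX' hyS' hXX' hSS'
  exact hfr.2 (mem_of_eventually_dimsMatch hI hmcI hε hfr.1 ⟨X, y, S, hmc⟩ hdims)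

end ParametricOptimization

theorem stmt6_general {n m : ℕ} {C Cbar : Matrix (Fin n) (Fin n) ℝ}
    {A : Fin m → Matrix (Fin n) (Fin n) ℝ} {b : Fin m → ℝ}
    (hSA : PrimalStandingAssumptions C Cbar A b)
    {I : Set ℝ} (hI : Maximal (IsConstantRankInterval C Cbar A b) I)
    (hIsc : ∀ ε ∈ I, HasStrictComp C Cbar A b ε)
    {εbar : ℝ} (hεbar : εbar ∈ interior (Eset C Cbar A b)) (hfr : εbar ∈ frontier I)
    {Xs Ss : Matrix (Fin n) (Fin n) ℝ} {ys : Fin m → ℝ}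
    (hmc : MaxComp C Cbar A b εbar Xs ys Ss)
    (hconv : IsInnerLimitOfOpt C Cbar A b εbar Xs ys Ss) :
    ¬ HasStrictComp C Cbar A b εbar ∧
      ∀ ε ∈ I, ∀ X y S, MaxComp C Cbar A b ε X y S → X.rank ≠ Xs.rank ∨ S.rank ≠ Ss.rank := by
  have hne : Xs.rank + Ss.rank ≠ n := hmc.rank_add_rank_ne_of_mem_frontier hSA hI
    (fun ε hε => (hIsc ε hε).exists_maxComp) hεbar hfr hconv
  refine ⟨fun hsc => hne (hmc.rank_add_rank_eq_of_hasStrictComp hSA hsc),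
    fun ε hε X y S h => ?_⟩
  by_contra! ⟨hX, hS⟩
  exact hne (hX ▸ hS ▸ h.rank_add_rank_eq_of_hasStrictComp hSA (hIsc ε hε))

/-- at a boundary point of a nonlinearity interval with strict complementarity,
if optimal solutions converge to a maximally complementary solution, then strict
complementarity fails at the boundary point and the ranks change there. -/
theorem stmt6 {n m : ℕ} (C Cbar : Matrix (Fin n) (Fin n) ℝ)
    (A : Fin m → Matrix (Fin n) (Fin n) ℝ) (b : Fin m → ℝ)
    (hSA : StandingAssumptions C Cbar A b)
    (I : Set ℝ) (hI : IsNonlinearityInterval C Cbar A b I)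
    (hIsc : ∀ ε ∈ I, HasStrictComp C Cbar A b ε)
    (εbar : ℝ) (hεbar : εbar ∈ interior (Eset C Cbar A b)) (hfr : εbar ∈ frontier I)
    (Xs Ss : Matrix (Fin n) (Fin n) ℝ) (ys : Fin m → ℝ)
    (hmc : MaxComp C Cbar A b εbar Xs ys Ss)
    (hconv : ∀ εk : ℕ → ℝ, (∀ k, εk k ∈ interior (Eset C Cbar A b)) →
      Filter.Tendsto εk Filter.atTop (nhds εbar) →
      ∃ (Xk : ℕ → Matrix (Fin n) (Fin n) ℝ) (yk : ℕ → Fin m → ℝ)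
          (Sk : ℕ → Matrix (Fin n) (Fin n) ℝ),
        (∀ k, Xk k ∈ PrimalOpt C Cbar A b (εk k) ∧ (yk k, Sk k) ∈ DualOpt C Cbar A b (εk k)) ∧
        Filter.Tendsto (fun k => (Xk k, yk k, Sk k)) Filter.atTop (nhds (Xs, ys, Ss))) :
    ¬ HasStrictComp C Cbar A b εbar ∧
      ∀ ξ : ℝ, 0 < ξ → ∀ ε ∈ Set.Ioo (εbar - ξ) (εbar + ξ) ∩ I,
        ∀ (X S : Matrix (Fin n) (Fin n) ℝ) (y : Fin m → ℝ), MaxComp C Cbar A b ε X y S →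
          Module.finrank ℝ (LinearMap.range X.mulVecLin) ≠
              Module.finrank ℝ (LinearMap.range Xs.mulVecLin) ∨
            Module.finrank ℝ (LinearMap.range S.mulVecLin) ≠
              Module.finrank ℝ (LinearMap.range Ss.mulVecLin) := by
  obtain ⟨hsc, hrank⟩ := stmt6_general hSA.primal hI.maximal hIsc hεbar hfr hmc hconv
  exact ⟨hsc, fun _ _ ε hε X S y => hrank ε hε.2 X y S⟩
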